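/- Let R ≥ 1, let g : ℝ^n → ℝ be a polynomial, let 0 < ρ < 1 and 0 ≤ λ ≤ 1, and let x ∈ ℝ^n. Then for independent y, y', z ∼ N(0,1)^n: E_{y,y',z}[ ( (Δ^{R,λ}_{y,y'}(g_{ρ|z}))(x) )² ] ≤ E_{y,y',z}[ ( (Δ^{R,λ}_{y,y'} g)_{ρ|z}(x) )² ]. -/

import Mathlib

open MeasureTheory ProbabilityTheory MvPolynomial

/-- The standard Gaussian measure `N(0,1)^n` on `ℝ^n`. -/
noncomputable def gaussianN (n : ℕ) : Measure (Fin n → ℝ) :=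
  Measure.pi fun _ => gaussianReal 0 1

/-- The normalized probabilists' Hermite polynomial `h_k = H_k / √(k!)`. -/
noncomputable def hermiteFn (k : ℕ) (t : ℝ) : ℝ :=
  ((Polynomial.hermite k).map (Int.castRingHom ℝ)).eval t / Real.sqrt (Nat.factorial k)

/-- The multivariate Hermite polynomial `h_α(x) = ∏ i, h_{α i}(x i)`. -/
noncomputable def hermiteMv {n : ℕ} (α : Fin n → ℕ) (x : Fin n → ℝ) : ℝ :=
  ∏ i, hermiteFn (α i) (x i)

/-- Hermite coefficient `f̂(α) = E_{x ∼ N(0,1)^n}[f(x)·h_α(x)]` of a function. -/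
noncomputable def hermiteCoeffF {n : ℕ} (f : (Fin n → ℝ) → ℝ) (α : Fin n → ℕ) : ℝ :=
  ∫ x, f x * hermiteMv α x ∂(gaussianN n)

/-- Hermite coefficient `ĝ(α)` of a polynomial. -/
noncomputable def hermiteCoeff {n : ℕ} (g : MvPolynomial (Fin n) ℝ) (α : Fin n → ℕ) : ℝ :=
  hermiteCoeffF (fun x => eval x g) α

/-- The squared Gaussian 2-norm `‖g‖₂² = E_{x ∼ N(0,1)^n}[g(x)²]`. -/
noncomputable def norm2sq {n : ℕ} (g : MvPolynomial (Fin n) ℝ) : ℝ :=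
  ∫ x, (eval x g) ^ 2 ∂(gaussianN n)

/-- The `λ`-zoom of `g` at `x`: `g_{λ|x}(y) = g(√(1-λ)·x + √λ·y)`, as a polynomial in `y`. -/
noncomputable def zoom {n : ℕ} (g : MvPolynomial (Fin n) ℝ) (lam : ℝ) (x : Fin n → ℝ) :
    MvPolynomial (Fin n) ℝ :=
  aeval (fun i => C (Real.sqrt (1 - lam) * x i) + C (Real.sqrt lam) * X i) g

/-- `HyperVar_R[g^{≥m}] = Σ_{|α| ≥ m} R^{2|α|}·ĝ(α)²`. -/
noncomputable def hyperVarGE {n : ℕ} (R : ℝ) (m : ℕ) (g : MvPolynomial (Fin n) ℝ) : ℝ :=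
  ∑' α : Fin n → ℕ, if m ≤ ∑ i, α i then R ^ (2 * ∑ i, α i) * hermiteCoeff g α ^ 2 else 0

/-- `HyperVar_R[g] = Σ_{α ≠ 0} R^{2|α|}·ĝ(α)²`. -/
noncomputable def hyperVar {n : ℕ} (R : ℝ) (g : MvPolynomial (Fin n) ℝ) : ℝ :=
  hyperVarGE R 1 g

/-- A nice distribution of polynomials of degree at most `d` on `ℝ^n`, indexed by
`υ ∈ ℝ^I`: each `g υ` has degree at most `d` and each coefficient of `g υ` is a
polynomial of degree at most `d` in `υ`. -/
def NiceFamily (n I d : ℕ) (g : (Fin I → ℝ) → MvPolynomial (Fin n) ℝ) : Prop :=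
  (∀ υ, (g υ).totalDegree ≤ d) ∧
  ∀ m : Fin n →₀ ℕ, ∃ P : MvPolynomial (Fin I) ℝ,
    P.totalDegree ≤ d ∧ ∀ υ, coeff m (g υ) = eval υ P

/-- The Gaussian noise operator `U_ρ f = Σ_α ρ^{|α|}·f̂(α)·h_α`, applied to a function. -/
noncomputable def noiseOpF {n : ℕ} (ρ : ℝ) (f : (Fin n → ℝ) → ℝ) (x : Fin n → ℝ) : ℝ :=
  ∑' α : Fin n → ℕ, ρ ^ (∑ i, α i) * hermiteCoeffF f α * hermiteMv α x

/-- The Gaussian noise operator applied to a polynomial. -/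
noncomputable def noiseOpP {n : ℕ} (ρ : ℝ) (g : MvPolynomial (Fin n) ℝ) :
    (Fin n → ℝ) → ℝ :=
  noiseOpF ρ (fun x => eval x g)

/-- The amplified noisy derivative operator
`(Δ^{R,λ}_{y,y'} g)(x) = (U_R(g_{λ|x})(y) − U_R(g_{λ|x})(y'))/√2`. -/
noncomputable def deltaOp {n : ℕ} (R lam : ℝ) (y y' : Fin n → ℝ)
    (g : MvPolynomial (Fin n) ℝ) (x : Fin n → ℝ) : ℝ :=
  (noiseOpP R (zoom g lam x) y - noiseOpP R (zoom g lam x) y') / Real.sqrt 2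

open Finset.HasAntidiagonal (antidiagonal mem_antidiagonal)

/-!
Put `v = 1 - ρ + ρλ` and `G = g_{v|x}`. For independent `y, y'`, the mean square of
`(P y - P y') / √2` is the variance of `P`, so `E_{y,y'}[(Δ^{R,λ}_{y,y'} f)(x)²]` is
`HyperVar_R[f_{λ|x}]`. Composing zooms turns the two sides into `E_z HyperVar_R[G_{s|z}]` and
`E_z HyperVar_R[G_{t|z}]` with `s = ρλ/v ≤ t = λ/v`. By the addition formula for Hermite polynomials
a `t`-zoom spreads the squared weight of `h_β` binomially over the `h_α` with `α ≤ β`; hence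
`E_z HyperVar_R[G_{t|z}] = Σ_β Ĝ(β)² ((1 - t + R² t)^|β| - (1 - t)^|β|)`,
which increases with `t` because `R ≥ 1`.
-/

/-! ### The addition formula for Hermite polynomials -/

-- The Leibniz rule for iterates of the operators `p - D`, `q - D` and `(p + q) - D`.
theorem eq_sum_antidiagonal_choose_mul_of_succ {R A : Type*} [CommRing R] [CommRing A]
    [Algebra R A] (D : Derivation R A A) {p q : A} {P Q S : ℕ → A}
    (h₀ : S 0 = P 0 * Q 0)
    (hP : ∀ k, P (k + 1) = p * P k - D (P k)) (hQ : ∀ k, Q (k + 1) = q * Q k - D (Q k))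
    (hS : ∀ k, S (k + 1) = (p + q) * S k - D (S k)) (k : ℕ) :
    S k = ∑ ij ∈ antidiagonal k, (k.choose ij.1 : A) * (P ij.1 * Q ij.2) := by
  induction k with
  | zero => simp [h₀]
  | succ k ih =>
    have hD (ij : ℕ × ℕ) : D ((k.choose ij.1 : A) * (P ij.1 * Q ij.2)) =
        k.choose ij.1 * (P ij.1 * D (Q ij.2) + Q ij.2 * D (P ij.1)) := by
      simp [Derivation.leibniz]
    rw [Finset.sum_antidiagonal_choose_succ_mul fun i j => P i * Q j, hS, ih, map_sum,
      Finset.mul_sum, ← Finset.sum_sub_distrib, ← Finset.sum_add_distrib]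
    refine Finset.sum_congr rfl fun ij hij => ?_
    rw [← Nat.choose_symm_of_eq_add (mem_antidiagonal.mp hij).symm, hD, hP, hQ]
    ring

theorem pow_mul_aeval_hermite_succ {A : Type*} [CommRing A] [Algebra ℤ A] (D : Derivation ℤ A A)
    {c u : A} (hc : D c = 0) (hu : D u = c) (k : ℕ) :
    c ^ (k + 1) * Polynomial.aeval u (Polynomial.hermite (k + 1)) =
      c * u * (c ^ k * Polynomial.aeval u (Polynomial.hermite k)) -
        D (c ^ k * Polynomial.aeval u (Polynomial.hermite k)) := by
  simp only [Polynomial.hermite_succ, map_sub, map_mul, Polynomial.aeval_X, Derivation.leibniz,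
    Derivation.leibniz_pow, Derivation.map_aeval, hc, hu, smul_eq_mul, nsmul_eq_mul]
  ring

-- Along the line `s ↦ (y + a s, z + b s)` both sides obey `S (k + 1) = (a y + b z) S k - (S k)'`,
-- because `a y + b z` has derivative `a² + b² = 1`; then evaluate at `s = 0`.
theorem aeval_hermite_add {A : Type*} [CommRing A] {a b : A} (hab : a ^ 2 + b ^ 2 = 1) (y z : A)
    (k : ℕ) :
    Polynomial.aeval (a * y + b * z) (Polynomial.hermite k) =
      ∑ ij ∈ antidiagonal k, (k.choose ij.1 : A) *
        (a ^ ij.1 * Polynomial.aeval y (Polynomial.hermite ij.1) *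
          (b ^ ij.2 * Polynomial.aeval z (Polynomial.hermite ij.2))) := by
  let D : Derivation ℤ (Polynomial A) (Polynomial A) := Polynomial.derivative'.restrictScalars ℤ
  let line (c u : A) : Polynomial A := Polynomial.C u + Polynomial.C c * Polynomial.X
  let w : Polynomial A := Polynomial.C a * line a y + Polynomial.C b * line b z
  have hC (c : A) : D (Polynomial.C c) = 0 := Polynomial.derivative_C
  have hline (c u : A) : D (line c u) = Polynomial.C c := by simp [D, line]
  have hw : D w = 1 := by
    have h : Polynomial.C a ^ 2 + Polynomial.C b ^ 2 = 1 := by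
      rw [← Polynomial.C_pow, ← Polynomial.C_pow, ← Polynomial.C_add, hab, Polynomial.C_1]
    simpa [w, hC, hline, ← sq] using h
  have hD (u : Polynomial A) (hu : D u = 1) (k : ℕ) :
      Polynomial.aeval u (Polynomial.hermite (k + 1)) =
        u * Polynomial.aeval u (Polynomial.hermite k) -
          D (Polynomial.aeval u (Polynomial.hermite k)) := by
    simpa only [one_pow, one_mul] using pow_mul_aeval_hermite_succ D D.map_one_eq_zero hu k
  have hsum := eq_sum_antidiagonal_choose_mul_of_succ D
    (P := fun k => Polynomial.C a ^ k * Polynomial.aeval (line a y) (Polynomial.hermite k))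
    (Q := fun k => Polynomial.C b ^ k * Polynomial.aeval (line b z) (Polynomial.hermite k))
    (S := fun k => Polynomial.aeval w (Polynomial.hermite k)) (by simp)
    (pow_mul_aeval_hermite_succ D (hC a) (hline a y))
    (pow_mul_aeval_hermite_succ D (hC b) (hline b z)) (hD w hw) k
  have heval (u : Polynomial A) (j : ℕ) :
      (Polynomial.aeval u (Polynomial.hermite j)).eval 0 =
        Polynomial.aeval (u.eval 0) (Polynomial.hermite j) := by
    simpa [← Polynomial.coe_aeval_eq_eval] using (Polynomial.aeval_algHom_apply
      ((Polynomial.aeval (0 : A)).restrictScalars ℤ) u (Polynomial.hermite j)).symm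
  simpa [Polynomial.eval_finsetSum, heval, line, w] using congrArg (Polynomial.eval 0) hsum

/-! ### Orthogonality of Hermite polynomials -/

theorem integrable_eval_gaussianReal (p : Polynomial ℝ) (μ : ℝ) (v : NNReal) :
    Integrable (fun x => p.eval x) (gaussianReal μ v) := by
  simp only [Polynomial.eval_eq_sum_range]
  refine integrable_finsetSum _ fun k _ => Integrable.const_mul ?_ _
  exact (memLp_id_gaussianReal' k (ENNReal.natCast_ne_top k)).integrable_norm_pow'.mono'
    (by fun_prop) (.of_forall fun x => (norm_pow x k).le)

theorem hasDerivAt_gaussianPDFReal (μ : ℝ) (v : NNReal) (x : ℝ) :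
    HasDerivAt (gaussianPDFReal μ v) (-((x - μ) / v) * gaussianPDFReal μ v x) x := by
  have hexp : HasDerivAt (fun x : ℝ => -(x - μ) ^ 2 / (2 * v)) (-((x - μ) / v)) x := by
    refine ((((hasDerivAt_id x).sub_const μ).pow 2).neg.div_const (2 * (v : ℝ))).congr_deriv ?_
    rw [← mul_div_mul_left _ (v : ℝ) two_ne_zero]
    simp [neg_div]
  rw [gaussianPDFReal_def]
  exact (hexp.exp.const_mul (√(2 * Real.pi * v))⁻¹).congr_deriv (by ring)

theorem integrable_gaussianReal_iff {μ : ℝ} {v : NNReal} (hv : v ≠ 0) {f : ℝ → ℝ} :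
    Integrable f (gaussianReal μ v) ↔ Integrable fun x => gaussianPDFReal μ v x * f x := by
  rw [gaussianReal_of_var_ne_zero _ hv, integrable_withDensity_iff_integrable_smul'
    (by fun_prop) (.of_forall fun _ => gaussianPDF_lt_top)]
  simp only [toReal_gaussianPDF, smul_eq_mul]

-- Stein's lemma: integrate the derivative of `f` times the Gaussian density.
theorem integral_sub_mul_gaussianReal {μ : ℝ} {v : NNReal} {f f' : ℝ → ℝ}
    (hf : ∀ x, HasDerivAt f (f' x) x) (hf_int : Integrable f (gaussianReal μ v))
    (hf'_int : Integrable f' (gaussianReal μ v))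
    (hxf_int : Integrable (fun x => (x - μ) * f x) (gaussianReal μ v)) :
    ∫ x, (x - μ) * f x ∂gaussianReal μ v = v * ∫ x, f' x ∂gaussianReal μ v := by
  obtain rfl | hv := eq_or_ne v 0
  · simp
  have hd (x : ℝ) : HasDerivAt (fun x => gaussianPDFReal μ v x * f x)
      (gaussianPDFReal μ v x * (f' x - (x - μ) * f x / v)) x :=
    ((hasDerivAt_gaussianPDFReal μ v x).mul (hf x)).congr_deriv (by ring)
  have hzero : ∫ x, (f' x - (x - μ) * f x / v) ∂gaussianReal μ v = 0 := by
    rw [integral_gaussianReal_eq_integral_smul hv]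
    exact integral_eq_zero_of_hasDerivAt_of_integrable hd
      ((integrable_gaussianReal_iff hv).mp (hf'_int.sub (hxf_int.div_const _)))
      ((integrable_gaussianReal_iff hv).mp hf_int)
  rw [integral_sub hf'_int (hxf_int.div_const _), integral_div, sub_eq_zero] at hzero
  rw [hzero, mul_div_cancel₀ _ (NNReal.coe_ne_zero.mpr hv)]

theorem integral_aeval_hermite_mul (k : ℕ) (q : Polynomial ℝ) :
    ∫ x, Polynomial.aeval x (Polynomial.hermite k) * q.eval x ∂gaussianReal 0 1 =
      ∫ x, (Polynomial.derivative^[k] q).eval x ∂gaussianReal 0 1 := by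
  induction k generalizing q with
  | zero => simp
  | succ k ih =>
    let H := (Polynomial.hermite k).map (Int.castRingHom ℝ)
    have hsucc (x : ℝ) : Polynomial.aeval x (Polynomial.hermite (k + 1)) * q.eval x =
        (x - 0) * (H * q).eval x - (H * q).derivative.eval x + (H * q.derivative).eval x := by
      simp only [Polynomial.hermite_succ, H, map_sub, map_mul, Polynomial.aeval_X,
        Polynomial.derivative_mul, Polynomial.derivative_map, Polynomial.eval_add,
        Polynomial.eval_mul, ← algebraMap_int_eq, Polynomial.eval_map_algebraMap]
      ring
    have hint (p : Polynomial ℝ) := integrable_eval_gaussianReal p 0 1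
    have hxint : Integrable (fun x => (x - 0) * (H * q).eval x) (gaussianReal 0 1) :=
      (hint (Polynomial.X * (H * q))).congr (by simp)
    have hstein := integral_sub_mul_gaussianReal (H * q).hasDerivAt (hint _) (hint _) hxint
    rw [Function.iterate_succ_apply, ← ih]
    simp only [hsucc]
    rw [integral_add (by exact hxint.sub (hint _)) (hint _), integral_sub hxint (hint _), hstein]
    simp [H, Polynomial.aeval_def, Polynomial.eval_map]

theorem iterate_derivative_natDegree {R : Type*} [Semiring R] (p : Polynomial R) :
    Polynomial.derivative^[p.natDegree] p =
      Polynomial.C (p.natDegree.factorial * p.leadingCoeff) := by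
  ext i
  rw [Polynomial.coeff_iterate_derivative, Polynomial.coeff_C]
  split_ifs with hi
  · simp [hi, Nat.descFactorial_self]
  · rw [Polynomial.coeff_eq_zero_of_natDegree_lt (by omega), smul_zero]

theorem integral_aeval_hermite_mul_aeval_hermite (j k : ℕ) :
    ∫ x, Polynomial.aeval x (Polynomial.hermite j) * Polynomial.aeval x (Polynomial.hermite k)
      ∂gaussianReal 0 1 = if j = k then (k.factorial : ℝ) else 0 := by
  wlog hkj : k ≤ j generalizing j k
  · convert this k j (le_of_not_ge hkj) using 1
    · simp only [mul_comm]
    · grind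
  have hmap (x : ℝ) (i : ℕ) : Polynomial.aeval x (Polynomial.hermite i) =
      ((Polynomial.hermite i).map (Int.castRingHom ℝ)).eval x := by
    simp [Polynomial.aeval_def, Polynomial.eval_map]
  have hdeg : ((Polynomial.hermite k).map (Int.castRingHom ℝ)).natDegree = k := by
    rw [(Polynomial.hermite_monic k).natDegree_map, Polynomial.natDegree_hermite]
  simp only [hmap _ k, integral_aeval_hermite_mul]
  split_ifs with h
  · subst h
    nth_rewrite 1 [← hdeg]
    rw [iterate_derivative_natDegree, hdeg, ((Polynomial.hermite_monic j).map _).leadingCoeff]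
    simp
  · rw [Polynomial.iterate_derivative_eq_zero (by omega)]
    simp

theorem hermiteFn_eq_aeval_div (k : ℕ) (t : ℝ) :
    hermiteFn k t = Polynomial.aeval t (Polynomial.hermite k) / √(k.factorial) := by
  rw [hermiteFn, ← algebraMap_int_eq, Polynomial.eval_map_algebraMap]

theorem hermiteFn_zero (t : ℝ) : hermiteFn 0 t = 1 := by
  simp [hermiteFn]

@[fun_prop]
theorem continuous_hermiteFn (k : ℕ) : Continuous (hermiteFn k) :=
  (Polynomial.continuous _).div_const _

theorem integrable_hermiteFn_mul (j k : ℕ) :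
    Integrable (fun t => hermiteFn j t * hermiteFn k t) (gaussianReal 0 1) := by
  simp only [hermiteFn, div_mul_div_comm, ← Polynomial.eval_mul]
  exact (integrable_eval_gaussianReal _ 0 1).div_const _

theorem integral_hermiteFn_mul (j k : ℕ) :
    ∫ t, hermiteFn j t * hermiteFn k t ∂gaussianReal 0 1 = if j = k then 1 else 0 := by
  simp only [hermiteFn_eq_aeval_div, div_mul_div_comm]
  rw [integral_div, integral_aeval_hermite_mul_aeval_hermite]
  split_ifs with h
  · rw [h, Real.mul_self_sqrt (by positivity), div_self (by positivity)]
  · exact zero_div _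

/-! ### One-dimensional zooms -/

theorem choose_mul_sqrt_div_sqrt_factorial {t : ℝ} (ht₀ : 0 ≤ t) (ht₁ : t ≤ 1) {k j : ℕ}
    (hj : j ≤ k) :
    k.choose j * (√t ^ j * √(1 - t) ^ (k - j)) / √(k.factorial) =
      √((bernsteinPolynomial ℝ k j).eval t) / (√(j.factorial) * √((k - j).factorial)) := by
  have hchoose : (0 : ℝ) < k.choose j := mod_cast Nat.choose_pos hj
  have hbern : (bernsteinPolynomial ℝ k j).eval t =
      (√(k.choose j) * (√t ^ j * √(1 - t) ^ (k - j))) ^ 2 := by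
    rw [mul_pow, mul_pow, pow_right_comm (√t), pow_right_comm (√(1 - t)),
      Real.sq_sqrt hchoose.le, Real.sq_sqrt ht₀, Real.sq_sqrt (sub_nonneg.mpr ht₁)]
    simp [bernsteinPolynomial, mul_assoc]
  have hfactorial :
      √(k.factorial : ℝ) = √(k.choose j) * (√(j.factorial) * √((k - j).factorial)) := by
    rw [← Real.sqrt_mul (by positivity), ← Real.sqrt_mul hchoose.le,
      ← Nat.choose_mul_factorial_mul_factorial hj]
    push_cast
    rw [mul_assoc]
  rw [hbern, Real.sqrt_sq (by positivity), hfactorial, div_eq_div_iff (by positivity)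
    (by positivity)]
  nth_rewrite 1 [← Real.mul_self_sqrt hchoose.le]
  ring

theorem hermiteFn_add {t : ℝ} (ht₀ : 0 ≤ t) (ht₁ : t ≤ 1) (k : ℕ) (y z : ℝ) :
    hermiteFn k (√(1 - t) * z + √t * y) =
      ∑ j ∈ Finset.range (k + 1),
        √((bernsteinPolynomial ℝ k j).eval t) * hermiteFn (k - j) z * hermiteFn j y := by
  have hab : √t ^ 2 + √(1 - t) ^ 2 = 1 := by
    rw [Real.sq_sqrt ht₀, Real.sq_sqrt (sub_nonneg.mpr ht₁), add_sub_cancel]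
  rw [hermiteFn_eq_aeval_div, add_comm, aeval_hermite_add hab, Finset.sum_div,
    Finset.Nat.sum_antidiagonal_eq_sum_range_succ_mk]
  refine Finset.sum_congr rfl fun j hj => ?_
  have hweight := choose_mul_sqrt_div_sqrt_factorial ht₀ ht₁ (Finset.mem_range_succ_iff.mp hj)
  rw [hermiteFn_eq_aeval_div, hermiteFn_eq_aeval_div]
  linear_combination (Polynomial.aeval y (Polynomial.hermite j) *
    Polynomial.aeval z (Polynomial.hermite (k - j))) * hweight

theorem integrable_hermiteFn_zoom_mul {t : ℝ} (ht₀ : 0 ≤ t) (ht₁ : t ≤ 1) (k j : ℕ) (z : ℝ) :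
    Integrable (fun y => hermiteFn k (√(1 - t) * z + √t * y) * hermiteFn j y)
      (gaussianReal 0 1) := by
  simp only [hermiteFn_add ht₀ ht₁, Finset.sum_mul, mul_assoc]
  exact integrable_finsetSum _ fun i _ =>
    ((integrable_hermiteFn_mul i j).const_mul _).const_mul _

theorem integral_hermiteFn_zoom_mul {t : ℝ} (ht₀ : 0 ≤ t) (ht₁ : t ≤ 1) (k j : ℕ) (z : ℝ) :
    ∫ y, hermiteFn k (√(1 - t) * z + √t * y) * hermiteFn j y ∂gaussianReal 0 1 =
      √((bernsteinPolynomial ℝ k j).eval t) * hermiteFn (k - j) z := by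
  simp only [hermiteFn_add ht₀ ht₁, Finset.sum_mul, mul_assoc]
  rw [integral_finsetSum _ fun i _ => ((integrable_hermiteFn_mul i j).const_mul _).const_mul _]
  simp only [integral_const_mul, integral_hermiteFn_mul, mul_ite, mul_one, mul_zero,
    Finset.sum_ite_eq', Finset.mem_range]
  split_ifs with h
  · rfl
  · rw [bernsteinPolynomial.eq_zero_of_lt ℝ (by lia)]
    simp

/-- The probability that independent binomial variables with parameters `β i` and `t` take the
values `α i`, written with Bernstein polynomials. It is the weight with which a `t`-zoom moves
`h_β` to `h_α`. -/
noncomputable def binomialProb {ι : Type*} [Fintype ι] (t : ℝ) (β α : ι → ℕ) : ℝ :=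
  ∏ i, (bernsteinPolynomial ℝ (β i) (α i)).eval t

section BinomialProb

variable {ι : Type*} [Fintype ι] {t : ℝ}

theorem eval_bernsteinPolynomial_nonneg (ht₀ : 0 ≤ t) (ht₁ : t ≤ 1) (k j : ℕ) :
    0 ≤ (bernsteinPolynomial ℝ k j).eval t := by
  have := sub_nonneg.mpr ht₁
  simp only [bernsteinPolynomial, Polynomial.eval_mul, Polynomial.eval_pow, Polynomial.eval_sub,
    Polynomial.eval_X, Polynomial.eval_one, Polynomial.eval_natCast]
  positivity

theorem sqrt_binomialProb (ht₀ : 0 ≤ t) (ht₁ : t ≤ 1) (β α : ι → ℕ) :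
    √(binomialProb t β α) = ∏ i, √((bernsteinPolynomial ℝ (β i) (α i)).eval t) :=
  Real.sqrt_prod _ fun _ _ => eval_bernsteinPolynomial_nonneg ht₀ ht₁ _ _

theorem binomialProb_nonneg (ht₀ : 0 ≤ t) (ht₁ : t ≤ 1) (β α : ι → ℕ) :
    0 ≤ binomialProb t β α :=
  Finset.prod_nonneg fun _ _ => eval_bernsteinPolynomial_nonneg ht₀ ht₁ _ _

theorem binomialProb_eq_zero {β α : ι → ℕ} (h : ¬α ≤ β) : binomialProb t β α = 0 := by
  obtain ⟨i, hi⟩ := not_forall.mp h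
  refine Finset.prod_eq_zero (Finset.mem_univ i) ?_
  rw [bernsteinPolynomial.eq_zero_of_lt ℝ (not_le.mp hi), Polynomial.eval_zero]

theorem binomialProb_zero_right (t : ℝ) (β : ι → ℕ) :
    binomialProb t β 0 = (1 - t) ^ ∑ i, β i := by
  simp [binomialProb, bernsteinPolynomial, Finset.prod_pow_eq_pow_sum]

theorem sum_pow_mul_binomialProb [DecidableEq ι] (s t : ℝ) (β : ι → ℕ) :
    ∑ α ∈ Finset.Iic β, s ^ (∑ i, α i) * binomialProb t β α = (1 - t + s * t) ^ ∑ i, β i := by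
  have hbinom (k : ℕ) : ∑ j ∈ Finset.Iic k, s ^ j * (bernsteinPolynomial ℝ k j).eval t =
      (1 - t + s * t) ^ k := by
    rw [add_comm, add_pow, Nat.range_succ_eq_Iic]
    refine Finset.sum_congr rfl fun j _ => ?_
    simp [bernsteinPolynomial]
    ring
  rw [← Finset.prod_pow_eq_pow_sum]
  simp only [← hbinom, Finset.prod_univ_sum, binomialProb, ← Finset.prod_pow_eq_pow_sum,
    ← Finset.prod_mul_distrib]
  rfl

end BinomialProb

theorem integral_sq_sum_of_orthonormal {Ω ι : Type*} [MeasurableSpace Ω] {μ : Measure Ω}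
    [DecidableEq ι] {T : Finset ι} {e : ι → Ω → ℝ} (he : ∀ i ∈ T, MemLp (e i) 2 μ)
    (horth : ∀ i ∈ T, ∀ j ∈ T, ∫ ω, e i ω * e j ω ∂μ = if i = j then 1 else 0) (c : ι → ℝ) :
    ∫ ω, (∑ i ∈ T, c i * e i ω) ^ 2 ∂μ = ∑ i ∈ T, c i ^ 2 := by
  have hint (i) (hi : i ∈ T) (j) (hj : j ∈ T) :
      Integrable (fun ω => c i * e i ω * (c j * e j ω)) μ :=
    ((he i hi).const_mul (c i)).integrable_mul ((he j hj).const_mul (c j))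
  have hmul (i j) :
      ∫ ω, c i * e i ω * (c j * e j ω) ∂μ = c i * c j * ∫ ω, e i ω * e j ω ∂μ := by
    rw [← integral_const_mul]
    exact integral_congr_ae (.of_forall fun ω => mul_mul_mul_comm _ _ _ _)
  simp only [sq, Finset.sum_mul_sum]
  rw [integral_finsetSum _ fun i hi => integrable_finsetSum _ (hint i hi)]
  refine Finset.sum_congr rfl fun i hi => ?_
  rw [integral_finsetSum _ (hint i hi), Finset.sum_eq_single_of_mem i hi]
  · rw [hmul, horth i hi i hi, if_pos rfl, mul_one]
  · intro j hj hji
    rw [hmul, horth i hi j hj, if_neg hji.symm, mul_zero]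

theorem integral_integral_sq_sub_div_sqrt_two {Ω : Type*} [MeasurableSpace Ω] {μ : Measure Ω}
    [IsProbabilityMeasure μ] {P : Ω → ℝ} (hP : MemLp P 2 μ) :
    ∫ y, ∫ y', ((P y - P y') / √2) ^ 2 ∂μ ∂μ = Var[P; μ] := by
  have hint := hP.integrable one_le_two
  have hinner (c : ℝ) : ∫ y', ((c - P y') / √2) ^ 2 ∂μ = (Var[P; μ] + (c - μ[P]) ^ 2) / 2 := by
    have hvar := variance_eq_sub (X := fun y' => c - P y') ((memLp_const c).sub hP)
    rw [variance_const_sub hP.aestronglyMeasurable, integral_sub (integrable_const c) hint,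
      integral_const, probReal_univ, one_smul] at hvar
    simp only [div_pow, Real.sq_sqrt zero_le_two, integral_div]
    rw [hvar, sub_add_cancel]
    rfl
  have hsq : Integrable (fun y => (P y - μ[P]) ^ 2) μ :=
    (hP.sub (memLp_const _)).integrable_sq
  simp only [hinner]
  rw [integral_div, integral_add (integrable_const _) hsq,
    ← variance_eq_integral hP.aemeasurable, integral_const, probReal_univ, one_smul,
    add_self_div_two]

/-! ### Multivariate Hermite expansions -/

instance isProbabilityMeasure_gaussianN (n : ℕ) : IsProbabilityMeasure (gaussianN n) := by
  unfold gaussianN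
  infer_instance

section Multivariate

variable {n : ℕ}

theorem hermiteMv_zero (x : Fin n → ℝ) : hermiteMv 0 x = 1 := by
  simp [hermiteMv, hermiteFn_zero]

theorem integrable_hermiteMv_mul (α β : Fin n → ℕ) :
    Integrable (fun x => hermiteMv α x * hermiteMv β x) (gaussianN n) := by
  simp only [hermiteMv, ← Finset.prod_mul_distrib]
  exact Integrable.fintype_prod (f := fun i t => hermiteFn (α i) t * hermiteFn (β i) t)
    fun i => integrable_hermiteFn_mul _ _

theorem memLp_hermiteMv (α : Fin n → ℕ) : MemLp (hermiteMv α) 2 (gaussianN n) := by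
  have hcont : Continuous (hermiteMv α) := by
    unfold hermiteMv
    fun_prop
  refine (memLp_two_iff_integrable_sq hcont.aestronglyMeasurable).mpr ?_
  simpa only [sq] using integrable_hermiteMv_mul α α

theorem integral_hermiteMv_mul (α β : Fin n → ℕ) :
    ∫ x, hermiteMv α x * hermiteMv β x ∂gaussianN n = if α = β then 1 else 0 := by
  simp only [hermiteMv, ← Finset.prod_mul_distrib, gaussianN]
  rw [integral_fintype_prod_eq_prod fun i t => hermiteFn (α i) t * hermiteFn (β i) t]
  simp [integral_hermiteFn_mul, funext_iff, Finset.prod_ite_zero]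

theorem integrable_hermiteMv_zoom_mul {t : ℝ} (ht₀ : 0 ≤ t) (ht₁ : t ≤ 1) (β α : Fin n → ℕ)
    (z : Fin n → ℝ) :
    Integrable (fun y => hermiteMv β (fun i => √(1 - t) * z i + √t * y i) * hermiteMv α y)
      (gaussianN n) := by
  simp only [hermiteMv, ← Finset.prod_mul_distrib]
  exact Integrable.fintype_prod
    (f := fun i s => hermiteFn (β i) (√(1 - t) * z i + √t * s) * hermiteFn (α i) s)
    fun i => integrable_hermiteFn_zoom_mul ht₀ ht₁ _ _ _

theorem integral_hermiteMv_zoom_mul {t : ℝ} (ht₀ : 0 ≤ t) (ht₁ : t ≤ 1) (β α : Fin n → ℕ)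
    (z : Fin n → ℝ) :
    ∫ y, hermiteMv β (fun i => √(1 - t) * z i + √t * y i) * hermiteMv α y ∂gaussianN n =
      √(binomialProb t β α) * hermiteMv (β - α) z := by
  simp only [hermiteMv, ← Finset.prod_mul_distrib, gaussianN]
  rw [integral_fintype_prod_eq_prod
    fun i s => hermiteFn (β i) (√(1 - t) * z i + √t * s) * hermiteFn (α i) s]
  simp only [integral_hermiteFn_zoom_mul ht₀ ht₁, Finset.prod_mul_distrib,
    sqrt_binomialProb ht₀ ht₁, Pi.sub_apply]

theorem eval_mem_span_hermiteFn (p : Polynomial ℝ) :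
    (fun t => p.eval t) ∈ Submodule.span ℝ (Set.range hermiteFn) := by
  let H : Polynomial.Sequence ℝ :=
    ⟨fun k => (Polynomial.hermite k).map (Int.castRingHom ℝ), fun k => by
      rw [(Polynomial.hermite_monic k).degree_map, Polynomial.degree_hermite]⟩
  have hspan : p ∈ Submodule.span ℝ (Set.range H) := by
    rw [H.span fun k => by
      rw [((Polynomial.hermite_monic k).map (Int.castRingHom ℝ)).leadingCoeff]
      exact isUnit_one]
    trivial
  obtain ⟨c, rfl⟩ := Finsupp.mem_span_range_iff_exists_finsupp.mp hspan
  have hH (k : ℕ) (t : ℝ) : (H k).eval t = √(k.factorial : ℝ) * hermiteFn k t :=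
    (mul_div_cancel₀ _ (by positivity)).symm
  have hsum : (fun t => (c.sum fun k a => a • H k).eval t) =
      ∑ k ∈ c.support, (c k * √(k.factorial : ℝ)) • hermiteFn k := by
    ext t
    simp [Finsupp.sum, Polynomial.eval_finsetSum, hH, mul_assoc]
  rw [hsum]
  exact Submodule.sum_smul_mem _ _ fun k _ => Submodule.subset_span ⟨k, rfl⟩

theorem eval_mem_span_hermiteMv (g : MvPolynomial (Fin n) ℝ) :
    (fun x => eval x g) ∈ Submodule.span ℝ (Set.range (hermiteMv (n := n))) := by
  have hmonomial (m : Fin n → ℕ) : (fun x : Fin n → ℝ => ∏ i, x i ^ m i) ∈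
      Submodule.span ℝ (Set.range (hermiteMv (n := n))) := by
    choose c hc using fun k => Finsupp.mem_span_range_iff_exists_finsupp.mp
      (eval_mem_span_hermiteFn (Polynomial.X ^ k))
    have hpow (k : ℕ) (t : ℝ) : t ^ k = ∑ j ∈ (c k).support, c k j * hermiteFn j t := by
      simpa [Finsupp.sum] using (congrFun (hc k) t).symm
    have hprod : (fun x : Fin n → ℝ => ∏ i, x i ^ m i) =
        ∑ α ∈ Fintype.piFinset fun i => (c (m i)).support,
          (∏ i, c (m i) (α i)) • hermiteMv α := by
      ext x
      simp [hpow, Finset.prod_univ_sum, Finset.prod_mul_distrib, hermiteMv]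
    rw [hprod]
    exact Submodule.sum_smul_mem _ _ fun α _ => Submodule.subset_span ⟨α, rfl⟩
  have hsum : (fun x => eval x g) =
      ∑ m ∈ g.support, coeff m g • fun x : Fin n → ℝ => ∏ i, x i ^ m i := by
    ext x
    simp [eval_eq']
  rw [hsum]
  exact Submodule.sum_smul_mem _ _ fun m _ => hmonomial m

theorem exists_finsupp_eval_eq_sum_hermiteMv (g : MvPolynomial (Fin n) ℝ) :
    ∃ c : (Fin n → ℕ) →₀ ℝ, ∀ x, eval x g = ∑ α ∈ c.support, c α * hermiteMv α x := by
  obtain ⟨c, hc⟩ := Finsupp.mem_span_range_iff_exists_finsupp.mp (eval_mem_span_hermiteMv g)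
  exact ⟨c, fun x => by simpa [Finsupp.sum] using (congrFun hc x).symm⟩

theorem hermiteCoeff_eq_of_eval_eq {g : MvPolynomial (Fin n) ℝ} {c : (Fin n → ℕ) →₀ ℝ}
    (hc : ∀ x, eval x g = ∑ α ∈ c.support, c α * hermiteMv α x) : hermiteCoeff g = c := by
  ext α
  simp only [hermiteCoeff, hermiteCoeffF, hc, Finset.sum_mul, mul_assoc]
  rw [integral_finsetSum _ fun β _ => (integrable_hermiteMv_mul β α).const_mul _]
  simp [integral_const_mul, integral_hermiteMv_mul, eq_comm]

theorem finite_support_hermiteCoeff (g : MvPolynomial (Fin n) ℝ) :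
    (Function.support (hermiteCoeff g)).Finite := by
  obtain ⟨c, hc⟩ := exists_finsupp_eval_eq_sum_hermiteMv g
  exact hermiteCoeff_eq_of_eval_eq hc ▸ c.hasFiniteSupport

/-- The multi-indices that occur in the Hermite expansion of a polynomial. -/
noncomputable def hermiteSupport (g : MvPolynomial (Fin n) ℝ) : Finset (Fin n → ℕ) :=
  (finite_support_hermiteCoeff g).toFinset

theorem mem_hermiteSupport {g : MvPolynomial (Fin n) ℝ} {α : Fin n → ℕ} :
    α ∈ hermiteSupport g ↔ hermiteCoeff g α ≠ 0 :=
  Set.Finite.mem_toFinset _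

theorem eval_eq_sum_hermiteCoeff_mul (g : MvPolynomial (Fin n) ℝ) (x : Fin n → ℝ) :
    eval x g = ∑ α ∈ hermiteSupport g, hermiteCoeff g α * hermiteMv α x := by
  obtain ⟨c, hc⟩ := exists_finsupp_eval_eq_sum_hermiteMv g
  have hsupp : hermiteSupport g = c.support := by
    ext α
    rw [mem_hermiteSupport, hermiteCoeff_eq_of_eval_eq hc, Finsupp.mem_support_iff]
  rw [hsupp, hermiteCoeff_eq_of_eval_eq hc, hc]

theorem noiseOpP_eq_sum (R : ℝ) (g : MvPolynomial (Fin n) ℝ) (y : Fin n → ℝ) :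
    noiseOpP R g y =
      ∑ α ∈ hermiteSupport g, R ^ (∑ i, α i) * hermiteCoeff g α * hermiteMv α y :=
  tsum_eq_sum fun α hα => by
    rw [mem_hermiteSupport, not_not] at hα
    change _ * hermiteCoeff g α * _ = 0
    rw [hα, mul_zero, zero_mul]

theorem hyperVar_eq_sum_sub (R : ℝ) {g : MvPolynomial (Fin n) ℝ} {S : Finset (Fin n → ℕ)}
    (hS : hermiteSupport g ⊆ S) :
    hyperVar R g =
      ∑ α ∈ S, R ^ (2 * ∑ i, α i) * hermiteCoeff g α ^ 2 - hermiteCoeff g 0 ^ 2 := by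
  have hzero {α : Fin n → ℕ} (hα : α ∉ S) : hermiteCoeff g α = 0 := by
    by_contra h
    exact hα (hS (mem_hermiteSupport.mpr h))
  have hterm (α : Fin n → ℕ) :
      (if 1 ≤ ∑ i, α i then R ^ (2 * ∑ i, α i) * hermiteCoeff g α ^ 2 else 0) =
        R ^ (2 * ∑ i, α i) * hermiteCoeff g α ^ 2 -
          if α = 0 then hermiteCoeff g 0 ^ 2 else 0 := by
    have hα : 1 ≤ ∑ i, α i ↔ α ≠ 0 := by
      simp [Nat.one_le_iff_ne_zero, funext_iff]
    obtain rfl | h := eq_or_ne α 0 <;> simp [*]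
  rw [hyperVar, hyperVarGE, tsum_eq_sum (s := S) fun α hα => by simp [hzero hα]]
  simp only [hterm, Finset.sum_sub_distrib, Finset.sum_ite_eq']
  split_ifs with h0
  · rfl
  · simp [hzero h0]

theorem memLp_noiseOpP (R : ℝ) (g : MvPolynomial (Fin n) ℝ) :
    MemLp (noiseOpP R g) 2 (gaussianN n) := by
  rw [funext (noiseOpP_eq_sum R g)]
  exact memLp_finsetSum _ fun α _ => (memLp_hermiteMv α).const_mul _

theorem integral_noiseOpP (R : ℝ) (g : MvPolynomial (Fin n) ℝ) :
    ∫ y, noiseOpP R g y ∂gaussianN n = hermiteCoeff g 0 := by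
  have hmean (α : Fin n → ℕ) : ∫ y, hermiteMv α y ∂gaussianN n = if α = 0 then 1 else 0 := by
    simpa [hermiteMv_zero] using integral_hermiteMv_mul α 0
  simp only [noiseOpP_eq_sum]
  rw [integral_finsetSum _ fun α _ => ((memLp_hermiteMv α).integrable one_le_two).const_mul _]
  simp [integral_const_mul, hmean, mem_hermiteSupport, eq_comm]

theorem integral_sq_noiseOpP (R : ℝ) (g : MvPolynomial (Fin n) ℝ) :
    ∫ y, noiseOpP R g y ^ 2 ∂gaussianN n =
      ∑ α ∈ hermiteSupport g, R ^ (2 * ∑ i, α i) * hermiteCoeff g α ^ 2 := by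
  simp only [noiseOpP_eq_sum]
  rw [integral_sq_sum_of_orthonormal (fun α _ => memLp_hermiteMv α)
    fun α _ β _ => integral_hermiteMv_mul α β]
  exact Finset.sum_congr rfl fun α _ => by ring

theorem variance_noiseOpP (R : ℝ) (g : MvPolynomial (Fin n) ℝ) :
    Var[noiseOpP R g; gaussianN n] = hyperVar R g := by
  rw [variance_eq_sub (memLp_noiseOpP R g), hyperVar_eq_sum_sub R subset_rfl, integral_noiseOpP,
    ← integral_sq_noiseOpP]
  rfl

theorem integral_sq_deltaOp (R lam : ℝ) (g : MvPolynomial (Fin n) ℝ) (x : Fin n → ℝ) :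
    ∫ y, ∫ y', deltaOp R lam y y' g x ^ 2 ∂gaussianN n ∂gaussianN n =
      hyperVar R (zoom g lam x) := by
  simp only [deltaOp]
  rw [integral_integral_sq_sub_div_sqrt_two (memLp_noiseOpP R _), variance_noiseOpP]

/-! ### Zooms and hypervariance -/

theorem eval_zoom (g : MvPolynomial (Fin n) ℝ) (lam : ℝ) (x y : Fin n → ℝ) :
    eval y (zoom g lam x) = eval (fun i => √(1 - lam) * x i + √lam * y i) g := by
  have hC : (eval y).comp (algebraMap ℝ (MvPolynomial (Fin n) ℝ)) = RingHom.id ℝ :=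
    RingHom.ext fun a => eval_C a
  rw [zoom, map_aeval, hC]
  change eval (fun i => eval y (C (√(1 - lam) * x i) + C √lam * X i)) g = _
  simp only [map_add, map_mul, eval_C, eval_X]

theorem zoom_zoom (g : MvPolynomial (Fin n) ℝ) {ρ lam v : ℝ} (hρ₀ : 0 ≤ ρ)
    (hv₀ : 0 < v) (hv : v = 1 - ρ + ρ * lam) (x z : Fin n → ℝ) :
    zoom (zoom g ρ z) lam x = zoom (zoom g v x) (ρ * lam / v) z := by
  have hx : √ρ * √(1 - lam) = √(1 - v) := by
    rw [← Real.sqrt_mul hρ₀]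
    congr 1
    linear_combination hv
  have hz : √v * √(1 - ρ * lam / v) = √(1 - ρ) := by
    rw [← Real.sqrt_mul hv₀.le, mul_one_sub, mul_div_cancel₀ _ hv₀.ne']
    congr 1
    linear_combination hv
  have hy : √v * √(ρ * lam / v) = √ρ * √lam := by
    rw [← Real.sqrt_mul hv₀.le, mul_div_cancel₀ _ hv₀.ne', Real.sqrt_mul hρ₀]
  refine MvPolynomial.funext fun y => ?_
  simp only [eval_zoom]
  congr 2 with i
  linear_combination x i * hx - z i * hz - y i * hy

theorem zoom_sqrt_mul_add (g : MvPolynomial (Fin n) ℝ) {ρ lam v : ℝ}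
    (hlam₁ : lam ≤ 1) (hv₀ : 0 < v) (hv : v = 1 - ρ + ρ * lam) (x z : Fin n → ℝ) :
    zoom g lam (fun i => √(1 - ρ) * z i + √ρ * x i) = zoom (zoom g v x) (lam / v) z := by
  have hx : √(1 - lam) * √ρ = √(1 - v) := by
    rw [← Real.sqrt_mul (sub_nonneg.mpr hlam₁)]
    congr 1
    linear_combination hv
  have hz : √v * √(1 - lam / v) = √(1 - lam) * √(1 - ρ) := by
    rw [← Real.sqrt_mul hv₀.le, ← Real.sqrt_mul (sub_nonneg.mpr hlam₁), mul_one_sub,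
      mul_div_cancel₀ _ hv₀.ne']
    congr 1
    linear_combination hv
  have hy : √v * √(lam / v) = √lam := by
    rw [← Real.sqrt_mul hv₀.le, mul_div_cancel₀ _ hv₀.ne']
  refine MvPolynomial.funext fun y => ?_
  simp only [eval_zoom]
  congr 2 with i
  linear_combination x i * hx - z i * hz - y i * hy

variable {t : ℝ}

theorem hermiteCoeff_zoom (ht₀ : 0 ≤ t) (ht₁ : t ≤ 1) (g : MvPolynomial (Fin n) ℝ)
    (z : Fin n → ℝ) (α : Fin n → ℕ) :
    hermiteCoeff (zoom g t z) α = ∑ β ∈ hermiteSupport g,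
      hermiteCoeff g β * √(binomialProb t β α) * hermiteMv (β - α) z := by
  change ∫ y, eval y (zoom g t z) * hermiteMv α y ∂gaussianN n = _
  simp only [eval_zoom, eval_eq_sum_hermiteCoeff_mul g, Finset.sum_mul, mul_assoc]
  rw [integral_finsetSum _ fun β _ =>
    (integrable_hermiteMv_zoom_mul ht₀ ht₁ β α z).const_mul _]
  simp only [integral_const_mul, integral_hermiteMv_zoom_mul ht₀ ht₁]

theorem integrable_sq_hermiteCoeff_zoom (ht₀ : 0 ≤ t) (ht₁ : t ≤ 1)
    (g : MvPolynomial (Fin n) ℝ) (α : Fin n → ℕ) :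
    Integrable (fun z => hermiteCoeff (zoom g t z) α ^ 2) (gaussianN n) := by
  simp only [hermiteCoeff_zoom ht₀ ht₁]
  exact (memLp_finsetSum _ fun β _ => (memLp_hermiteMv (β - α)).const_mul _).integrable_sq

theorem integral_sq_hermiteCoeff_zoom (ht₀ : 0 ≤ t) (ht₁ : t ≤ 1)
    (g : MvPolynomial (Fin n) ℝ) (α : Fin n → ℕ) :
    ∫ z, hermiteCoeff (zoom g t z) α ^ 2 ∂gaussianN n =
      ∑ β ∈ hermiteSupport g, hermiteCoeff g β ^ 2 * binomialProb t β α := by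
  classical
  have hle (β : Fin n → ℕ) (hβ : binomialProb t β α ≠ 0) : α ≤ β :=
    not_imp_comm.mp binomialProb_eq_zero hβ
  have hcoeff (z : Fin n → ℝ) : hermiteCoeff (zoom g t z) α =
      ∑ β ∈ hermiteSupport g with α ≤ β,
        hermiteCoeff g β * √(binomialProb t β α) * hermiteMv (β - α) z := by
    rw [hermiteCoeff_zoom ht₀ ht₁, Finset.sum_filter_of_ne]
    exact fun β _ hβ => hle β fun h => hβ (by simp [h])
  have horth : ∀ β ∈ (hermiteSupport g).filter (α ≤ ·),
      ∀ γ ∈ (hermiteSupport g).filter (α ≤ ·),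
        ∫ z, hermiteMv (β - α) z * hermiteMv (γ - α) z ∂gaussianN n = if β = γ then 1 else 0 := by
    intro β hβ γ hγ
    simp only [integral_hermiteMv_mul,
      tsub_left_inj (Finset.mem_filter.mp hβ).2 (Finset.mem_filter.mp hγ).2]
  simp only [hcoeff]
  rw [integral_sq_sum_of_orthonormal (fun β _ => memLp_hermiteMv _) horth]
  simp only [mul_pow, Real.sq_sqrt (binomialProb_nonneg ht₀ ht₁ _ _)]
  exact Finset.sum_filter_of_ne fun β _ hβ => hle β (right_ne_zero_of_mul hβ)

theorem hermiteSupport_zoom_subset (ht₀ : 0 ≤ t) (ht₁ : t ≤ 1) (g : MvPolynomial (Fin n) ℝ)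
    (z : Fin n → ℝ) : hermiteSupport (zoom g t z) ⊆ (hermiteSupport g).biUnion Finset.Iic := by
  intro α hα
  rw [mem_hermiteSupport, hermiteCoeff_zoom ht₀ ht₁] at hα
  obtain ⟨β, hβ, hterm⟩ := Finset.exists_ne_zero_of_sum_ne_zero hα
  refine Finset.mem_biUnion.mpr ⟨β, hβ, Finset.mem_Iic.mpr ?_⟩
  by_contra h
  exact hterm (by simp [binomialProb_eq_zero h])

theorem integral_hyperVar_zoom (ht₀ : 0 ≤ t) (ht₁ : t ≤ 1) (R : ℝ)
    (g : MvPolynomial (Fin n) ℝ) :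
    ∫ z, hyperVar R (zoom g t z) ∂gaussianN n = ∑ β ∈ hermiteSupport g,
      hermiteCoeff g β ^ 2 *
        ((1 - t + R ^ 2 * t) ^ (∑ i, β i) - (1 - t) ^ (∑ i, β i)) := by
  let S := (hermiteSupport g).biUnion Finset.Iic
  have hgen (β) (hβ : β ∈ hermiteSupport g) :
      ∑ α ∈ S, R ^ (2 * ∑ i, α i) * binomialProb t β α =
        (1 - t + R ^ 2 * t) ^ ∑ i, β i := by
    simp only [← sum_pow_mul_binomialProb, ← pow_mul]
    refine (Finset.sum_subset (Finset.subset_biUnion_of_mem _ hβ) fun α _ hα => ?_).symm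
    rw [binomialProb_eq_zero (Finset.mem_Iic.not.mp hα), mul_zero]
  have hint (α : Fin n → ℕ) := integrable_sq_hermiteCoeff_zoom ht₀ ht₁ g α
  simp only [hyperVar_eq_sum_sub R (hermiteSupport_zoom_subset ht₀ ht₁ g _)]
  rw [integral_sub (integrable_finsetSum _ fun α _ => (hint α).const_mul _) (hint 0),
    integral_finsetSum _ fun α _ => (hint α).const_mul _]
  simp only [integral_const_mul, integral_sq_hermiteCoeff_zoom ht₀ ht₁, Finset.mul_sum _ _ (R ^ _)]
  rw [Finset.sum_comm, ← Finset.sum_sub_distrib]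
  refine Finset.sum_congr rfl fun β hβ => ?_
  rw [← hgen β hβ, binomialProb_zero_right, mul_sub, Finset.mul_sum S]
  simp only [mul_left_comm, S]

theorem monotoneOn_integral_hyperVar_zoom {R : ℝ} (hR : 1 ≤ R) (g : MvPolynomial (Fin n) ℝ) :
    MonotoneOn (fun t => ∫ z, hyperVar R (zoom g t z) ∂gaussianN n) (Set.Icc 0 1) := by
  intro s hs t ht hst
  have hR' : 1 ≤ R ^ 2 := one_le_pow₀ hR
  have h₀ : 0 ≤ 1 - s + R ^ 2 * s := by nlinarith [hs.1]
  have hbase : 1 - s + R ^ 2 * s ≤ 1 - t + R ^ 2 * t := by nlinarith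
  simp only [integral_hyperVar_zoom hs.1 hs.2, integral_hyperVar_zoom ht.1 ht.2]
  gcongr
  exact sub_nonneg.mpr ht.2

end Multivariate

/-- Derivatives commute with zooms, in expectation (Proposition on every outcome):
for `R ≥ 1`, a polynomial `g`, `0 < ρ < 1`, `0 ≤ λ ≤ 1`, any fixed `x`, and
independent `y, y', z ∼ N(0,1)^n`,
`E[((Δ^{R,λ}_{y,y'}(g_{ρ|z}))(x))²] ≤ E[((Δ^{R,λ}_{y,y'} g)_{ρ|z}(x))²]`,
where `(Δ^{R,λ}_{y,y'} g)_{ρ|z}(x) = (Δ^{R,λ}_{y,y'} g)(√(1-ρ)·z + √ρ·x)`. -/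
theorem delta_zoom_inequality (n : ℕ) (R : ℝ) (hR : 1 ≤ R)
    (g : MvPolynomial (Fin n) ℝ) (ρ lam : ℝ) (hρ0 : 0 < ρ) (hρ1 : ρ < 1)
    (hl0 : 0 ≤ lam) (hl1 : lam ≤ 1) (x : Fin n → ℝ) :
    (∫ z, ∫ y, ∫ y', (deltaOp R lam y y' (zoom g ρ z) x) ^ 2
        ∂(gaussianN n) ∂(gaussianN n) ∂(gaussianN n)) ≤
      ∫ z, ∫ y, ∫ y',
        (deltaOp R lam y y' g (fun i => Real.sqrt (1 - ρ) * z i + Real.sqrt ρ * x i)) ^ 2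
        ∂(gaussianN n) ∂(gaussianN n) ∂(gaussianN n) := by
  set v := 1 - ρ + ρ * lam with hv
  have hv₀ : 0 < v := add_pos_of_pos_of_nonneg (sub_pos.mpr hρ1) (by positivity)
  have hlam : lam / v ≤ 1 := (div_le_one hv₀).mpr (by
    linarith [mul_nonneg (sub_nonneg.mpr hρ1.le) (sub_nonneg.mpr hl1)])
  have hle : ρ * lam / v ≤ lam / v := by
    gcongr
    exact mul_le_of_le_one_left hl0 hρ1.le
  have h₀ : 0 ≤ ρ * lam / v := by positivity
  simp only [integral_sq_deltaOp, zoom_zoom g hρ0.le hv₀ hv,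
    zoom_sqrt_mul_add g hl1 hv₀ hv]
  exact monotoneOn_integral_hyperVar_zoom hR (zoom g v x) ⟨h₀, hle.trans hlam⟩
    ⟨h₀.trans hle, hlam⟩ hle
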